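/- Let q be a prime with q > p_1 ⋯ p_r and let s be an integer. Let T : ℤ_P → ℤ_P be the map x ↦ (q/(p_1 ⋯ p_r)) x + s p_1 ⋯ p_r / q reef reduced modulo ι(P⁻¹ℤ) (i.e. composed with the projection of ℚ_P onto the fundamental domain ℤ_P for the lattice ι(P⁻¹ℤ)). Then T is metrically transitive on ℤ_P: every measurable set A ⊆ ℤ_P with T(A) ⊆ A has λ(A) = 0 or λ(A) = 1. -/

import Mathlib

open MeasureTheory Filter Set

noncomputable section

/-- Borel measurable structure on `ℚ_[q]`. -/
instance (q : ℕ) [Fact q.Prime] : MeasurableSpace ℚ_[q] := borel _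
instance (q : ℕ) [Fact q.Prime] : BorelSpace ℚ_[q] := ⟨rfl⟩

/-- The normalized Haar measure on `ℚ_[q]`, giving the unit ball `ℤ_[q]` measure 1. -/
def padicHaar (q : ℕ) [Fact q.Prime] : Measure ℚ_[q] :=
  Measure.addHaarMeasure
    ⟨⟨Metric.closedBall 0 1, isCompact_closedBall 0 1⟩,
      ⟨0, mem_interior_iff_mem_nhds.2 (Metric.closedBall_mem_nhds 0 one_pos)⟩⟩

variable (r : ℕ) (p : Fin r → ℕ) [∀ i, Fact (p i).Prime]

/-- The space `ℚ_P = ℝ × ℚ_{p_1} × ⋯ × ℚ_{p_r}`. -/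
abbrev QP : Type := ℝ × ((i : Fin r) → ℚ_[p i])

/-- `P⁻¹ℤ = { n p_1^{ν_1} ⋯ p_r^{ν_r} : n, ν_i ∈ ℤ }`, as a set of rationals. -/
def PinvZ : Set ℚ :=
  {q : ℚ | ∃ (n : ℤ) (ν : Fin r → ℤ), q = (n : ℚ) * ∏ i, (p i : ℚ) ^ (ν i)}

/-- The diagonal embedding `ι : ℚ → ℚ_P`. -/
def iota (q : ℚ) : QP r p := ((q : ℝ), fun i => (q : ℚ_[p i]))

/-- Coordinatewise multiplication of `x ∈ ℚ_P` by a rational number `γ`. -/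
def smulQ (γ : ℚ) (x : QP r p) : QP r p :=
  ((γ : ℝ) * x.1, fun i => (γ : ℚ_[p i]) * x.2 i)

/-- The distance `d(x,y) = max_{p ∈ P} |x_p - y_p|_p` on `ℚ_P`. -/
def dP (x y : QP r p) : ℝ :=
  max |x.1 - y.1| (⨆ i, ‖x.2 i - y.2 i‖)

/-- The level `ℓ(γ) = max_{p ∈ P} |γ|_p` of a rational number `γ`. -/
def lev (γ : ℚ) : ℝ :=
  max |(γ : ℝ)| (⨆ i, ‖(γ : ℚ_[p i])‖)

/-- `L(γ) = max_{p ∈ P} (|γ|_∞ |γ|_{p_1} ⋯ |γ|_{p_r}) / |γ|_p` (which equals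
`max_{p ∈ P} n/|γ|_p` for `γ = n p_1^{ν_1} ⋯ p_r^{ν_r}` with `n ∈ ℕ` coprime to the `p i`). -/
def LP (γ : ℚ) : ℝ :=
  max ((|(γ : ℝ)| * ∏ i, ‖(γ : ℚ_[p i])‖) / |(γ : ℝ)|)
    (⨆ i, (|(γ : ℝ)| * ∏ j, ‖(γ : ℚ_[p j])‖) / ‖(γ : ℚ_[p i])‖)

/-- The fundamental domain `ℤ_P = [0,1) × ℤ_{p_1} × ⋯ × ℤ_{p_r}`. -/
def ZP : Set (QP r p) :=
  {x : QP r p | x.1 ∈ Set.Ico (0 : ℝ) 1 ∧ ∀ i, ‖x.2 i‖ ≤ 1}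

/-- The measure `λ` on `ℚ_P`: the product of Lebesgue measure on `ℝ` and the
normalized Haar measures on the `ℚ_{p_i}`. -/
def lamP : Measure (QP r p) :=
  (volume : Measure ℝ).prod (Measure.pi fun i => padicHaar (p i))

/-- Two elements of `P⁻¹ℤ` are coprime if they admit decompositions
`β = m p_1^{μ_1} ⋯ p_r^{μ_r}`, `γ = n p_1^{ν_1} ⋯ p_r^{ν_r}` with `m, n` coprime to all the
`p i` and `gcd(m,n) = 1`. -/
def CoprimePair (β γ : ℚ) : Prop :=
  ∃ (m n : ℤ) (μ ν : Fin r → ℤ),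
    β = (m : ℚ) * ∏ i, (p i : ℚ) ^ (μ i) ∧
    γ = (n : ℚ) * ∏ i, (p i : ℚ) ^ (ν i) ∧
    (∀ i, ¬ ((p i : ℤ) ∣ m)) ∧ (∀ i, ¬ ((p i : ℤ) ∣ n)) ∧ IsCoprime m n

/-- For nonzero `γ = n p_1^{ν_1} ⋯ p_r^{ν_r} ∈ P⁻¹ℤ` with `n ∈ ℕ` coprime to the `p i`,
`unitPart γ = n`: the positive integer obtained from `γ` by removing all powers of the `p i`. -/
def unitPart (γ : ℚ) : ℕ :=
  (γ.num.natAbs * γ.den) / ∏ i, (p i) ^ ((γ.num.natAbs * γ.den).factorization (p i))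

/-- The summand `φ(n) ψ(γ)^{r+1} / n`, where `γ = n p_1^{ν_1} ⋯ p_r^{ν_r}` with `n ∈ ℕ`
coprime to the `p i` and `φ` is Euler's totient function. -/
def dsWeight (ψ : ℚ → ℝ) (γ : ℚ) : ℝ :=
  (Nat.totient (unitPart r p γ) : ℝ) * ψ γ ^ (r + 1) / (unitPart r p γ : ℝ)

/-- The set `𝒜(ψ)` of `x ∈ ℤ_P` such that `d(γ·x, ι(β)) < ψ(γ)` for infinitely many coprime
pairs `β, γ ∈ P⁻¹ℤ`. -/
def Apsi (ψ : ℚ → ℝ) : Set (QP r p) :=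
  {x : QP r p | x ∈ ZP r p ∧
    {bg : ℚ × ℚ | bg.1 ∈ PinvZ r p ∧ bg.2 ∈ PinvZ r p ∧ CoprimePair r p bg.1 bg.2 ∧
      dP r p (smulQ r p bg.2 x) (iota r p bg.1) < ψ bg.2}.Infinite}

/-- The set `ℰ(ψ)` of `x ∈ ℤ_P` such that `d(γ·x, ι(β)) ≤ ψ(γ)` for infinitely many coprime
pairs `β, γ ∈ P⁻¹ℤ`. -/
def Epsi (ψ : ℚ → ℝ) : Set (QP r p) :=
  {x : QP r p | x ∈ ZP r p ∧
    {bg : ℚ × ℚ | bg.1 ∈ PinvZ r p ∧ bg.2 ∈ PinvZ r p ∧ CoprimePair r p bg.1 bg.2 ∧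
      dP r p (smulQ r p bg.2 x) (iota r p bg.1) ≤ ψ bg.2}.Infinite}

/-- The union of boxes
`⋃_{a=1, (a,m)=1}^{m} B_∞(a/m, ρ/(m p_1^{μ_1} ⋯ p_r^{μ_r})) × ∏_i B_{p_i}(a/m, p_i^{μ_i} ρ)`,
associated to `β = m p_1^{μ_1} ⋯ p_r^{μ_r}` and radius parameter `ρ = ψ(β)`. -/
def Abox (m : ℕ) (μ : Fin r → ℤ) (ρ : ℝ) : Set (QP r p) :=
  ⋃ a ∈ Finset.filter (fun a => Nat.Coprime a m) (Finset.Icc 1 m),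
    {x : QP r p |
      x.1 ∈ Metric.ball ((a : ℝ) / (m : ℝ)) (ρ / ((m : ℝ) * ∏ i, (p i : ℝ) ^ (μ i))) ∧
      ∀ i, x.2 i ∈ Metric.ball ((((a : ℚ) / (m : ℚ)) : ℚ_[p i])) ((p i : ℝ) ^ (μ i) * ρ)}

/-- A box in `ℚ_P`: a product of a ball from each of the constituent spaces. -/
def IsBox (S : Set (QP r p)) : Prop :=
  ∃ (c : ℝ) (ρ : ℝ) (cp : (i : Fin r) → ℚ_[p i]) (ρp : Fin r → ℝ),
    S = {x : QP r p | x.1 ∈ Metric.ball c ρ ∧ ∀ i, x.2 i ∈ Metric.ball (cp i) (ρp i)}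

end

/-!
Let `Γ = ι(P⁻¹ℤ)`, let `F = ℤ_P` and let `f x = γ x + t` be the affine lift of `T`. Since `Γ` is
stable under multiplication by `γ`, invariance of `A` under `T` says that `f`, and hence every
iterate of `f`, maps `A` into the periodic set `Γ + A`. A translate of `F` has disjoint translates
by `Γ`, so it meets `Γ + A` in measure at most `λ(A)`; pulling back by the `n`-th iterate of `f`,
which scales `λ` by a constant, every translate of `D = γ⁻ⁿF` meets `A` in a proportion at most
`λ(A) / λ(F)`.

Multiplication by `γ` expands in every coordinate, so `D` shrinks to `0`. Averaging the last bound
over the translates of `D` that meet a compact `K ⊆ A`, all of which have their base point in a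
small neighbourhood `U` of `K`, gives `λ(K) λ(F) ≤ λ(U) λ(A)`. By regularity `λ(U)` can be taken
arbitrarily close to `λ(K)`, so `λ(F) ≤ λ(A)` as soon as `λ(A) > 0`.
-/

section Packing

open scoped Pointwise

theorem measure_le_of_subset_iUnion_vadd {G α : Type*} [AddGroup G] [Countable G] [AddAction G α]
    [MeasurableSpace α] [MeasurableConstVAdd G α] {μ : Measure α} [VAddInvariantMeasure G α μ]
    {s t : Set α} (hs : MeasurableSet s) (ht : MeasurableSet t)
    (hdisj : Pairwise (Function.onFun Disjoint fun g : G => g +ᵥ s))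
    (hcover : s ⊆ ⋃ g : G, g +ᵥ t) : μ s ≤ μ t :=
  calc μ s = μ (⋃ g : G, s ∩ (g +ᵥ t)) := by rw [← inter_iUnion, inter_eq_left.2 hcover]
    _ ≤ ∑' g : G, μ (s ∩ (g +ᵥ t)) := measure_iUnion_le _
    _ = ∑' g : G, μ ((-g +ᵥ s) ∩ t) := by
        congr! 2 with g
        rw [← measure_vadd μ (-g) (s ∩ (g +ᵥ t)), vadd_set_inter, neg_vadd_vadd]
    _ ≤ μ (⋃ g : G, (-g +ᵥ s) ∩ t) :=
        tsum_meas_le_meas_iUnion_of_disjoint μ (fun g => (hs.const_vadd (-g)).inter ht)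
          fun g h hgh => (hdisj (neg_injective.ne hgh)).mono inter_subset_left inter_subset_left
    _ ≤ μ t := measure_mono (iUnion_subset fun _ => inter_subset_right)

end Packing

section Density

open scoped Pointwise

variable {G : Type*} [AddCommGroup G] [MeasurableSpace G] {μ : Measure G}

theorem measurableSet_addSubgroup_add [MeasurableAdd G] {Γ : AddSubgroup G} [Countable Γ]
    {A : Set G} (hA : MeasurableSet A) : MeasurableSet ((Γ : Set G) + A) := by
  rw [← vadd_eq_add, ← iUnion_vadd_set]
  exact .biUnion (to_countable (Γ : Set G)) fun g _ => hA.const_vadd g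

theorem measure_addSubgroup_add_inter_vadd_le [MeasurableAdd G] [μ.IsAddLeftInvariant]
    {Γ : AddSubgroup G} [Countable Γ] {F A : Set G} (hF : MeasurableSet F)
    (hdisj : Pairwise (Function.onFun Disjoint fun g : Γ => g +ᵥ F)) (hA : MeasurableSet A)
    (w : G) : μ (((Γ : Set G) + A) ∩ (w +ᵥ F)) ≤ μ A := by
  refine measure_le_of_subset_iUnion_vadd (G := Γ)
    ((measurableSet_addSubgroup_add hA).inter (hF.const_vadd w)) hA (fun g h hgh => ?_) ?_
  · have hw : Disjoint (w +ᵥ (g +ᵥ F)) (w +ᵥ (h +ᵥ F)) := disjoint_vadd_set.2 (hdisj hgh)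
    rw [vadd_comm w, vadd_comm w] at hw
    exact hw.mono (vadd_set_mono inter_subset_right) (vadd_set_mono inter_subset_right)
  · rintro _ ⟨⟨g, hg, a, ha, rfl⟩, -⟩
    exact mem_iUnion_of_mem ⟨g, hg⟩ (vadd_mem_vadd_set ha)

theorem lintegral_measure_inter_vadd [MeasurableAdd₂ G] [MeasurableNeg G] [SFinite μ]
    [μ.IsAddLeftInvariant] [μ.IsNegInvariant]
    {K D : Set G} (hK : MeasurableSet K) (hD : MeasurableSet D) :
    ∫⁻ x, μ (K ∩ (x +ᵥ D)) ∂μ = μ K * μ D := by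
  have hS : MeasurableSet {z : G × G | z.2 ∈ K ∧ z.2 - z.1 ∈ D} :=
    (measurable_snd hK).inter ((measurable_snd.sub measurable_fst) hD)
  have hleft (x : G) : Prod.mk x ⁻¹' {z : G × G | z.2 ∈ K ∧ z.2 - z.1 ∈ D} = K ∩ (x +ᵥ D) := by
    ext y
    simp [mem_vadd_set_iff_neg_vadd_mem, sub_eq_neg_add]
  have hright (y : G) : μ ((·, y) ⁻¹' {z : G × G | z.2 ∈ K ∧ z.2 - z.1 ∈ D}) =
      K.indicator (fun _ => μ D) y := by
    by_cases hy : y ∈ K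
    · simpa [hy, preimage] using
        (μ.measurePreserving_sub_left y).measure_preimage hD.nullMeasurableSet
    · simp [hy]
  calc ∫⁻ x, μ (K ∩ (x +ᵥ D)) ∂μ
      = ∫⁻ y, μ ((·, y) ⁻¹' {z : G × G | z.2 ∈ K ∧ z.2 - z.1 ∈ D}) ∂μ := by
        simp only [← hleft]
        rw [← Measure.prod_apply hS, Measure.prod_apply_symm hS]
    _ = μ K * μ D := by
        simp only [hright, lintegral_indicator_const hK, mul_comm]

variable [TopologicalSpace G] [BorelSpace G] [IsTopologicalAddGroup G] [LocallyCompactSpace G]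
  [μ.IsAddHaarMeasure]

theorem addEquivAddHaarChar_smul_preimage_add_const [μ.Regular] (φ : G ≃ₜ+ G) (c : G) (Y : Set G) :
    addEquivAddHaarChar φ • μ ((φ · + c) ⁻¹' Y) = μ Y := by
  rw [← measure_preimage_add_right μ c Y]
  exact addEquivAddHaarChar_smul_preimage μ φ (X := (· + c) ⁻¹' Y)

theorem addEquivAddHaarChar_smul_measure_inter_vadd_le [μ.Regular] {Γ : AddSubgroup G}
    [Countable Γ] {F A : Set G} (hF : MeasurableSet F)
    (hdisj : Pairwise (Function.onFun Disjoint fun g : Γ => g +ᵥ F)) (hA : MeasurableSet A)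
    {φ : G ≃ₜ+ G} {c : G} (hφ : MapsTo (φ · + c) A (Γ + A)) (x : G) :
    addEquivAddHaarChar φ • μ (A ∩ (x +ᵥ φ ⁻¹' F)) ≤ μ A := by
  have hsub : A ∩ (x +ᵥ φ ⁻¹' F) ⊆ (φ · + c) ⁻¹' ((Γ + A) ∩ ((φ x + c) +ᵥ F)) := by
    rintro _ ⟨hyA, d, hd, rfl⟩
    refine ⟨hφ hyA, φ d, hd, ?_⟩
    simp only [vadd_eq_add, map_add]
    abel
  calc addEquivAddHaarChar φ • μ (A ∩ (x +ᵥ φ ⁻¹' F))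
      ≤ addEquivAddHaarChar φ • μ ((φ · + c) ⁻¹' ((Γ + A) ∩ ((φ x + c) +ᵥ F))) := by gcongr
    _ = μ ((Γ + A) ∩ ((φ x + c) +ᵥ F)) := addEquivAddHaarChar_smul_preimage_add_const φ c _
    _ ≤ μ A := measure_addSubgroup_add_inter_vadd_le hF hdisj hA _

variable [SecondCountableTopology G]

theorem measure_mul_measure_le_of_mapsTo_add {Γ : AddSubgroup G} [Countable Γ]
    {F A : Set G} (hF : MeasurableSet F)
    (hdisj : Pairwise (Function.onFun Disjoint fun g : Γ => g +ᵥ F)) (hA : MeasurableSet A)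
    {φ : G ≃ₜ+ G} {c : G} (hφ : MapsTo (φ · + c) A (Γ + A))
    {K U : Set G} (hK : MeasurableSet K) (hKA : K ⊆ A) (hU : MeasurableSet U)
    (hKU : K - φ ⁻¹' F ⊆ U) :
    μ K * μ F ≤ μ U * μ A := by
  have hD : MeasurableSet (φ ⁻¹' F) := φ.continuous.measurable hF
  have hlocal (x : G) : addEquivAddHaarChar φ • μ (K ∩ (x +ᵥ φ ⁻¹' F)) ≤
      U.indicator (fun _ => μ A) x := by
    by_cases hx : x ∈ U
    · rw [indicator_of_mem hx]
      refine le_trans ?_ (addEquivAddHaarChar_smul_measure_inter_vadd_le hF hdisj hA hφ x)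
      gcongr
    · have hempty : K ∩ (x +ᵥ φ ⁻¹' F) = ∅ := by
        rw [eq_empty_iff_forall_notMem]
        rintro _ ⟨hy, d, hd, rfl⟩
        exact hx (hKU ⟨_, hy, d, hd, by simp⟩)
      simp [hempty]
  calc μ K * μ F = addEquivAddHaarChar φ • (μ K * μ (φ ⁻¹' F)) := by
        rw [← addEquivAddHaarChar_smul_preimage μ φ (X := F), ENNReal.smul_def, ENNReal.smul_def,
          smul_eq_mul, smul_eq_mul, mul_left_comm]
    _ = ∫⁻ x, addEquivAddHaarChar φ • μ (K ∩ (x +ᵥ φ ⁻¹' F)) ∂μ := by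
        simp only [ENNReal.smul_def, smul_eq_mul]
        rw [lintegral_const_mul' _ _ ENNReal.coe_ne_top, lintegral_measure_inter_vadd hK hD]
    _ ≤ ∫⁻ x, U.indicator (fun _ => μ A) x ∂μ := lintegral_mono hlocal
    _ = μ U * μ A := by rw [lintegral_indicator_const hU, mul_comm]

theorem measure_eq_zero_or_eq_of_expanding [T2Space G] {Γ : AddSubgroup G} [Countable Γ]
    {F A : Set G} (hF : MeasurableSet F)
    (hdisj : Pairwise (Function.onFun Disjoint fun g : Γ => g +ᵥ F)) (hA : MeasurableSet A)
    (hAF : A ⊆ F)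
    (hexp : ∀ V ∈ nhds (0 : G), ∃ (φ : G ≃ₜ+ G) (c : G),
      φ ⁻¹' F ⊆ V ∧ MapsTo (φ · + c) A (Γ + A)) :
    μ A = 0 ∨ μ A = μ F := by
  refine or_iff_not_imp_left.2 fun hA0 => (measure_mono hAF).antisymm ?_
  obtain ⟨K, hKA, hK, hK0⟩ := hA.exists_lt_isCompact (pos_iff_ne_zero.2 hA0)
  by_contra! hlt
  have hKlt : μ K < μ K * μ F / μ A := by
    rw [ENNReal.lt_div_iff_mul_lt (.inl hA0) (.inl hlt.ne_top)]
    exact ENNReal.mul_lt_mul_right hK0.ne' hK.measure_lt_top.ne hlt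
  obtain ⟨U, hKU, hU, hUlt⟩ := K.exists_isOpen_lt_of_lt _ hKlt
  obtain ⟨V, hV, hKV⟩ := compact_open_separated_add_right hK hU hKU
  obtain ⟨φ, c, hφV, hφ⟩ := hexp (-V) (neg_mem_nhds_zero G hV)
  have hKφ : K - φ ⁻¹' F ⊆ U := by
    rw [sub_eq_add_neg]
    exact (add_subset_add_left (neg_subset.2 hφV)).trans hKV
  exact (ENNReal.mul_lt_of_lt_div hUlt).not_ge <|
    measure_mul_measure_le_of_mapsTo_add hF hdisj hA hφ hK.measurableSet hKA hU.measurableSet hKφ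

end Density

section NormedRing

open scoped Pointwise

variable {R : Type*} [NormedRing R]

theorem tendsto_preimage_units_pow_mul_smallSets {u : Rˣ} (hu : ‖(↑u⁻¹ : R)‖ < 1) {F : Set R}
    (hF : Bornology.IsBounded F) :
    Tendsto (fun n : ℕ => ((↑(u ^ n) : R) * ·) ⁻¹' F) atTop (nhds 0).smallSets := by
  obtain ⟨C, hC⟩ := hF.exists_norm_le
  have hlim : Tendsto (fun n : ℕ => ‖(↑u⁻¹ : R) ^ n‖ * C) atTop (nhds 0) := by
    simpa using (tendsto_pow_atTop_nhds_zero_of_norm_lt_one hu).norm.mul_const C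
  refine Metric.nhds_basis_ball.smallSets.tendsto_right_iff.2 fun ε hε => ?_
  filter_upwards [hlim.eventually_lt_const hε] with n hn x hx
  rw [mem_ball_zero_iff]
  calc ‖x‖ = ‖(↑u⁻¹ : R) ^ n * (↑(u ^ n) * x)‖ := by
        rw [← Units.val_pow_eq_pow_val, inv_pow, Units.inv_mul_cancel_left]
    _ ≤ ‖(↑u⁻¹ : R) ^ n‖ * ‖(↑(u ^ n) : R) * x‖ := norm_mul_le _ _
    _ ≤ ‖(↑u⁻¹ : R) ^ n‖ * C := by gcongr; exact hC _ hx
    _ < ε := hn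

theorem iterate_mul_add_const (a t x : R) (n : ℕ) :
    (a * · + t)^[n] x = a ^ n * x + (a * · + t)^[n] 0 := by
  induction n with
  | zero => simp
  | succ n ih =>
    rw [Function.iterate_succ_apply', Function.iterate_succ_apply', ih, mul_add, pow_succ',
      mul_assoc, add_assoc]

theorem mapsTo_mul_add_const_addSubgroup_add {Γ : AddSubgroup R} {a t : R} {A : Set R}
    (ha : ∀ g ∈ Γ, a * g ∈ Γ) (hA : MapsTo (a * · + t) A (Γ + A)) :
    MapsTo (a * · + t) ((Γ : Set R) + A) (Γ + A) := by
  rintro _ ⟨g, hg, x, hx, rfl⟩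
  obtain ⟨h, hh, y, hy, hxy⟩ := hA hx
  refine ⟨a * g + h, Γ.add_mem (ha g hg) hh, y, hy, ?_⟩
  simp only at hxy ⊢
  rw [mul_add, add_assoc, add_assoc, hxy]

theorem measure_eq_zero_or_eq_of_mapsTo_mul_add [MeasurableSpace R] [BorelSpace R]
    [LocallyCompactSpace R] [SecondCountableTopology R] {μ : Measure R} [μ.IsAddHaarMeasure]
    {Γ : AddSubgroup R} [Countable Γ] {u : Rˣ} (hu : ‖(↑u⁻¹ : R)‖ < 1)
    (huΓ : ∀ g ∈ Γ, ↑u * g ∈ Γ) {F : Set R} (hF : MeasurableSet F) (hFb : Bornology.IsBounded F)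
    (hdisj : Pairwise (Function.onFun Disjoint fun g : Γ => g +ᵥ F)) {A : Set R}
    (hA : MeasurableSet A) (hAF : A ⊆ F) {t : R} (hinv : MapsTo (↑u * · + t) A (Γ + A)) :
    μ A = 0 ∨ μ A = μ F := by
  refine measure_eq_zero_or_eq_of_expanding hF hdisj hA hAF fun V hV => ?_
  obtain ⟨n, hn⟩ := ((tendsto_smallSets_iff.1
    (tendsto_preimage_units_pow_mul_smallSets hu hFb)) V hV).exists
  refine ⟨.mulLeft (u ^ n), (↑u * · + t)^[n] 0, hn, fun x hx => ?_⟩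
  have hiter := (mapsTo_mul_add_const_addSubgroup_add huΓ hinv).iterate n
    (subset_add_right A Γ.zero_mem hx)
  rwa [iterate_mul_add_const, ← Units.val_pow_eq_pow_val] at hiter

end NormedRing

section Arithmetic

theorem exists_intCast_mul_prod_zpow_eq_of_le {ι K : Type*} [Fintype ι] [Field K] {p : ι → ℕ}
    (hp : ∀ i, (p i : K) ≠ 0) {κ ν : ι → ℤ} (hκν : κ ≤ ν) (n : ℤ) :
    ∃ m : ℤ, (n : K) * ∏ i, (p i : K) ^ ν i = m * ∏ i, (p i : K) ^ κ i := by
  refine ⟨n * ∏ i, (p i : ℤ) ^ (ν i - κ i).toNat, ?_⟩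
  push_cast
  rw [mul_assoc, ← Finset.prod_mul_distrib]
  congr! 2 with i
  rw [← zpow_natCast, Int.toNat_of_nonneg (sub_nonneg.2 (hκν i)), ← zpow_add₀ (hp i),
    sub_add_cancel]

theorem den_eq_one_of_forall_padic_norm_le_one {x : ℚ}
    (hx : ∀ (ℓ : ℕ) [Fact ℓ.Prime], ‖(x : ℚ_[ℓ])‖ ≤ 1) : x.den = 1 := by
  by_contra! hden
  obtain ⟨ℓ, hℓ, hdvd⟩ := Nat.ne_one_iff_exists_prime_dvd.1 hden
  have : Fact ℓ.Prime := ⟨hℓ⟩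
  exact Rat.padicValuation_le_one_iff.1
    ((Padic.norm_rat_le_one_iff_padicValuation_le_one ℓ).1 (hx ℓ)) hdvd

variable {r : ℕ} {p : Fin r → ℕ}

theorem div_prod_mem_PinvZ (n : ℤ) : (n : ℚ) / ∏ i, (p i : ℚ) ∈ PinvZ r p :=
  ⟨n, -1, by simp [div_eq_mul_inv]⟩

variable [∀ i, Fact (p i).Prime]

theorem prod_primes_pos : 0 < ∏ i, p i :=
  Finset.prod_pos fun _ _ => Nat.Prime.pos Fact.out

theorem natCast_prime_ne_zero (i : Fin r) : (p i : ℚ) ≠ 0 :=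
  Nat.cast_ne_zero.2 (Fact.out : (p i).Prime).ne_zero

variable (p) in
/-- The ring `P⁻¹ℤ = ℤ[1/p_1, …, 1/p_r]` as a subring of `ℚ` with carrier `PinvZ r p`. -/
def pinvZSubring : Subring ℚ where
  carrier := PinvZ r p
  zero_mem' := ⟨0, 0, by simp⟩
  one_mem' := ⟨1, 0, by simp⟩
  neg_mem' := by
    rintro _ ⟨n, ν, rfl⟩
    exact ⟨-n, ν, by push_cast; ring⟩
  mul_mem' := by
    rintro _ _ ⟨n, ν, rfl⟩ ⟨m, μ, rfl⟩
    refine ⟨n * m, ν + μ, ?_⟩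
    simp only [Pi.add_apply, zpow_add₀ (natCast_prime_ne_zero _), Finset.prod_mul_distrib]
    push_cast
    ring
  add_mem' := by
    rintro _ _ ⟨n, ν, rfl⟩ ⟨m, μ, rfl⟩
    obtain ⟨n', hn'⟩ :=
      exists_intCast_mul_prod_zpow_eq_of_le (natCast_prime_ne_zero (p := p)) inf_le_left n
    obtain ⟨m', hm'⟩ :=
      exists_intCast_mul_prod_zpow_eq_of_le (natCast_prime_ne_zero (p := p)) inf_le_right m
    exact ⟨n' + m', ν ⊓ μ, by rw [hn', hm', Int.cast_add, add_mul]⟩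

theorem padic_norm_le_one_of_mem_PinvZ {ℓ : ℕ} [Fact ℓ.Prime] (hℓ : ∀ i, p i ≠ ℓ) {g : ℚ}
    (hg : g ∈ PinvZ r p) : ‖(g : ℚ_[ℓ])‖ ≤ 1 := by
  obtain ⟨n, ν, rfl⟩ := hg
  have hunit (i : Fin r) : ‖(p i : ℚ_[ℓ])‖ = 1 :=
    Padic.norm_natCast_eq_one_iff.2 ((Nat.coprime_primes Fact.out Fact.out).2 (hℓ i).symm)
  push_cast
  simpa [norm_prod, hunit] using Padic.norm_int_le_one n

theorem eq_zero_of_mem_PinvZ_of_norm_le_one {g : ℚ} (hg : g ∈ PinvZ r p) (hreal : |g| < 1)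
    (hpadic : ∀ i, ‖(g : ℚ_[p i])‖ ≤ 1) : g = 0 := by
  have hden : g.den = 1 := den_eq_one_of_forall_padic_norm_le_one fun ℓ _ => by
    by_cases hℓ : ∃ i, p i = ℓ
    · obtain ⟨i, rfl⟩ := hℓ
      convert hpadic i
    · exact padic_norm_le_one_of_mem_PinvZ (not_exists.1 hℓ) hg
  lift g to ℤ using hden
  exact_mod_cast Int.abs_lt_one_iff.1 (mod_cast hreal)

end Arithmetic

section Domain

open scoped Pointwise

variable {r : ℕ} (p : Fin r → ℕ) [∀ i, Fact (p i).Prime]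

/-- The diagonal embedding `iota r p` as a ring homomorphism. By definition of the product ring,
`smulQ r p γ x` is `iotaHom p γ * x`. -/
noncomputable def iotaHom : ℚ →+* QP r p :=
  (Rat.castHom ℝ).prod (RingHom.pi fun i => Rat.castHom ℚ_[p i])

/-- The lattice `ι(P⁻¹ℤ)` in `ℚ_P`. -/
noncomputable def iotaLattice : AddSubgroup (QP r p) :=
  (pinvZSubring p).toAddSubgroup.map (iotaHom p).toAddMonoidHom

instance : Countable (iotaLattice p) :=
  ((to_countable (PinvZ r p)).image (iota r p)).to_subtype

instance (q : ℕ) [Fact q.Prime] : (padicHaar q).IsAddHaarMeasure := by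
  unfold padicHaar
  infer_instance

instance : (lamP r p).IsAddHaarMeasure := by
  unfold lamP
  infer_instance

theorem ZP_eq_prod :
    ZP r p = Ico (0 : ℝ) 1 ×ˢ univ.pi fun i => Metric.closedBall (0 : ℚ_[p i]) 1 := by
  ext x
  simp [ZP]

theorem measurableSet_ZP : MeasurableSet (ZP r p) := by
  rw [ZP_eq_prod]
  exact measurableSet_Ico.prod (.univ_pi fun _ => Metric.isClosed_closedBall.measurableSet)

theorem isBounded_ZP : Bornology.IsBounded (ZP r p) := by
  rw [ZP_eq_prod]
  exact (Metric.isBounded_Ico 0 1).prod (.pi fun _ => Metric.isBounded_closedBall)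

theorem padicHaar_closedBall (q : ℕ) [Fact q.Prime] :
    padicHaar q (Metric.closedBall 0 1) = 1 :=
  Measure.addHaarMeasure_self (K₀ := ⟨⟨Metric.closedBall 0 1, isCompact_closedBall 0 1⟩,
    ⟨0, mem_interior_iff_mem_nhds.2 (Metric.closedBall_mem_nhds 0 one_pos)⟩⟩)

theorem lamP_ZP : lamP r p (ZP r p) = 1 := by
  simp [ZP_eq_prod, lamP, Measure.prod_prod, Measure.pi_pi, padicHaar_closedBall]

variable {p}

theorem eq_of_mem_iota_vadd_ZP {g h : ℚ} (hg : g ∈ PinvZ r p) (hh : h ∈ PinvZ r p) {x : QP r p}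
    (hxg : x ∈ iota r p g +ᵥ ZP r p) (hxh : x ∈ iota r p h +ᵥ ZP r p) : g = h := by
  obtain ⟨y, ⟨hy, hyp⟩, rfl⟩ := hxg
  obtain ⟨z, ⟨hz, hzp⟩, hyz⟩ := hxh
  have hdiff : iota r p (g - h) = z - y := by
    rw [show iota r p (g - h) = iota r p g - iota r p h from map_sub (iotaHom p) g h,
      sub_eq_sub_iff_add_eq_add, add_comm z]
    exact hyz.symm
  refine sub_eq_zero.1 <|
    eq_zero_of_mem_PinvZ_of_norm_le_one ((pinvZSubring p).sub_mem hg hh) ?_ fun i => ?_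
  · have hreal : ((g - h : ℚ) : ℝ) = z.1 - y.1 := congrArg Prod.fst hdiff
    have habs : |((g - h : ℚ) : ℝ)| < 1 := by
      rw [hreal, abs_sub_lt_iff]
      constructor <;> linarith [hy.1, hy.2, hz.1, hz.2]
    exact_mod_cast habs
  · have hcoord : ((g - h : ℚ) : ℚ_[p i]) = z.2 i - y.2 i := congrFun (congrArg Prod.snd hdiff) i
    rw [hcoord]
    exact (PadicInt.subring (p i)).sub_mem (hzp i) (hyp i)

variable (p) in
theorem pairwise_disjoint_vadd_ZP :
    Pairwise (Function.onFun Disjoint fun g : iotaLattice p => g +ᵥ ZP r p) := by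
  rintro ⟨_, g, hg, rfl⟩ ⟨_, h, hh, rfl⟩ hgh
  refine disjoint_left.2 fun x hxg hxh => hgh (Subtype.ext ?_)
  exact congrArg (iota r p) (eq_of_mem_iota_vadd_ZP hg hh hxg hxh)

end Domain

section Transitivity

open scoped Pointwise

variable {r : ℕ} {p : Fin r → ℕ} [∀ i, Fact (p i).Prime]

theorem norm_iota_inv_lt_one {γ : ℚ} (hreal : 1 < |(γ : ℝ)|)
    (hpadic : ∀ i, 1 < ‖(γ : ℚ_[p i])‖) : ‖iota r p γ⁻¹‖ < 1 := by
  refine max_lt ?_ ((pi_norm_lt_iff one_pos).2 fun i => ?_)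
  · simpa [iota, ← Rat.norm_cast_real] using inv_lt_one_of_one_lt₀ hreal
  · simpa [iota] using inv_lt_one_of_one_lt₀ (hpadic i)

theorem diagonal_metrically_transitive_general {γ : ℚ} (hγ : γ ∈ PinvZ r p)
    (hreal : 1 < |(γ : ℝ)|) (hpadic : ∀ i, 1 < ‖(γ : ℚ_[p i])‖) {t : QP r p}
    {T : QP r p → QP r p}
    (hT : ∀ x ∈ ZP r p, ∃ g ∈ PinvZ r p, T x = smulQ r p γ x + t - iota r p g)
    {A : Set (QP r p)} (hA : A ⊆ ZP r p) (hAm : MeasurableSet A) (hTA : T '' A ⊆ A) :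
    lamP r p A = 0 ∨ lamP r p A = 1 := by
  have hγ0 : γ ≠ 0 := by
    rintro rfl
    norm_num at hreal
  let u : (QP r p)ˣ := Units.map (iotaHom p) (Units.mk0 γ hγ0)
  have huΓ : ∀ x ∈ iotaLattice p, ↑u * x ∈ iotaLattice p := by
    rintro _ ⟨g, hg, rfl⟩
    exact ⟨γ * g, (pinvZSubring p).mul_mem hγ hg, map_mul (iotaHom p) γ g⟩
  have hinv : MapsTo (↑u * · + t) A (iotaLattice p + A) := fun x hx => by
    obtain ⟨g, hg, hTx⟩ := hT x (hA hx)
    exact ⟨iota r p g, ⟨g, hg, rfl⟩, T x, hTA (mem_image_of_mem T hx),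
      hTx ▸ add_sub_cancel (iota r p g) _⟩
  rw [← lamP_ZP p]
  exact measure_eq_zero_or_eq_of_mapsTo_mul_add (norm_iota_inv_lt_one hreal hpadic) huΓ
    (measurableSet_ZP p) (isBounded_ZP p) (pairwise_disjoint_vadd_ZP p) hAm hA hinv

theorem one_lt_padic_norm_div_prod {q : ℕ} {i : Fin r} (hq : (p i).Coprime q) :
    1 < ‖(((q : ℚ) / ∏ j, (p j : ℚ) : ℚ) : ℚ_[p i])‖ := by
  have hnum : ‖(q : ℚ_[p i])‖ = 1 := Padic.norm_natCast_eq_one_iff.2 hq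
  have hden : ‖((∏ j, p j : ℕ) : ℚ_[p i])‖ < 1 :=
    Padic.norm_natCast_lt_one_iff.2 (Finset.dvd_prod_of_mem p (Finset.mem_univ i))
  have hden0 : ((∏ j, p j : ℕ) : ℚ_[p i]) ≠ 0 :=
    Nat.cast_ne_zero.2 prod_primes_pos.ne'
  push_cast at hden hden0 ⊢
  rw [norm_div, hnum]
  exact (one_lt_div (norm_pos_iff.2 hden0)).2 hden

theorem one_lt_abs_div_prod {q : ℕ} (hq : ∏ i, p i < q) :
    1 < |(((q : ℚ) / ∏ i, (p i : ℚ) : ℚ) : ℝ)| := by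
  have hpos : (0 : ℝ) < ∏ i, (p i : ℝ) := mod_cast prod_primes_pos (p := p)
  push_cast
  exact lt_abs.2 (.inl ((one_lt_div hpos).2 (mod_cast hq)))

end Transitivity

/-- **Metric transitivity.** For a prime `q > p_1 ⋯ p_r` and `s ∈ ℤ`, the self-map `T` of
`ℤ_P` given by `x ↦ (q/(p_1 ⋯ p_r)) x + s p_1 ⋯ p_r / q` reduced modulo `ι(P⁻¹ℤ)` is
metrically transitive: any measurable `A ⊆ ℤ_P` with `T(A) ⊆ A` has `λ(A) = 0` or `λ(A) = 1`. -/
theorem diagonal_metrically_transitive (r : ℕ) (p : Fin r → ℕ)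
    [∀ i, Fact (p i).Prime] (hinj : Function.Injective p)
    (q : ℕ) (hq : q.Prime) (hq2 : ∏ i, p i < q) (s : ℤ)
    (T : QP r p → QP r p)
    (hT : ∀ x ∈ ZP r p, T x ∈ ZP r p ∧
      ∃ g ∈ PinvZ r p,
        T x = smulQ r p ((q : ℚ) / ∏ i, (p i : ℚ)) x
            + iota r p ((s : ℚ) * (∏ i, (p i : ℚ)) / (q : ℚ)) - iota r p g)
    (A : Set (QP r p)) (hA : A ⊆ ZP r p) (hAm : MeasurableSet A) (hTA : T '' A ⊆ A) :
    lamP r p A = 0 ∨ lamP r p A = 1 := by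
  have hcop (i : Fin r) : (p i).Coprime q :=
    (Nat.coprime_primes Fact.out hq).2 ((Nat.le_of_dvd prod_primes_pos
      (Finset.dvd_prod_of_mem p (Finset.mem_univ i))).trans_lt hq2).ne
  exact diagonal_metrically_transitive_general (div_prod_mem_PinvZ q) (one_lt_abs_div_prod hq2)
    (fun i => one_lt_padic_norm_div_prod (hcop i)) (fun x hx => (hT x hx).2) hA hAm hTA
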